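/- Let n ≥ 1 and k ≥ 1 be integers, let R₁, …, R_{k−1} be nonnegative integers with R₁ + ⋯ + R_{k−1} ≤ n − k, and set γ_v = n − v + 1 − Σ_{u=1}^{v−1} R_u for 1 ≤ v ≤ k (so γ_k ≥ 1). Let θ > 0, T > 0, let i be an integer with 1 ≤ i ≤ k, and let t be a real number with t/i < 1/θ; write s = 1/θ − t/i > 0. Then ∫_{0 < z₁ < ⋯ < z_{k−1} < z_k, z_k > T} exp(−s(Σ_{h=1}^{k−1} z_h (1 + R_h) + z_k γ_k)) dz₁ ⋯ dz_k = s^{−k} Σ_{v=0}^{k−1} (−1)^v e^{−s T γ_{k−v}} / [ (∏_{j=1}^{v} (γ_{k−v} − γ_{k−v+j})) (∏_{j=1}^{k−1−v} (γ_j − γ_{k−v})) · γ_{k−v} ]. (This identity is the computational content of the conditional moment generating function of θ̂₁ given T < Z_{k:m:n} < Z_{m:m:n} and D₁ = i.) -/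

import Mathlib

/-!
Since `1 + R_h = γ_h - γ_{h+1}`, the exponent is `∑ h < k, z_h (a_h - a_{h+1}) + z_k a_k` with
`a_h = -s γ_h`. Integrating out `z₁ < ⋯ < z_{k-1}` for fixed `z_k = y` gives, up to the factor
`exp (-a_k y)`, the divided difference at `a_1, …, a_k` of the function `t ↦ exp (t y)` (the
Hermite–Genocchi formula), because splitting off the largest coordinate matches the recursion
obtained from adjoining a node. It then remains to integrate a combination of the exponentials
`exp (a_v y)` over `y > T`, and its coefficients are the Lagrange nodal weights of the `a_v`.
-/

open MeasureTheory

/-- `γ_v = n − v + 1 − Σ_{u=1}^{v−1} R_u`, the number of surviving units at the time of the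
`v`-th failure in a progressive censoring scheme with removals `R 1, R 2, …`. -/
noncomputable def gam (n : ℕ) (R : ℕ → ℕ) (v : ℕ) : ℝ :=
  (n : ℝ) - v + 1 - ∑ u ∈ Finset.Icc 1 (v - 1), (R u : ℝ)

section DividedDifferences

variable {ι F : Type*} [DecidableEq ι] [Field F] {s : Finset ι} {i j : ι}

lemma nodalWeight_insert (a : ι → F) (hi : i ∉ s) (hj : j ∈ s) :
    Lagrange.nodalWeight (insert i s) a j = Lagrange.nodalWeight s a j * (a j - a i)⁻¹ := by
  have hij : i ≠ j := fun h ↦ hi (h ▸ hj)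
  rw [Lagrange.nodalWeight, Finset.erase_insert_of_ne hij,
    Finset.prod_insert (mt Finset.mem_of_mem_erase hi), mul_comm, Lagrange.nodalWeight]

lemma sum_nodalWeight_eq_zero {a : ι → F} (ha : Set.InjOn a s) (hs : 1 < s.card) :
    ∑ i ∈ s, Lagrange.nodalWeight s a i = 0 := by
  have hdeg : (1 : Polynomial F).degree < s.card := by
    rw [Polynomial.degree_one]
    exact_mod_cast zero_lt_one.trans hs
  have hcoeff := Lagrange.coeff_eq_sum ha hdeg
  rw [Polynomial.coeff_one, if_neg (by lia)] at hcoeff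
  simpa [Lagrange.nodalWeight, Finset.prod_inv_distrib] using hcoeff.symm

lemma nodalWeight_range (a : ℕ → F) (u v : ℕ) :
    Lagrange.nodalWeight (Finset.range (u + v + 1)) a u =
      ((∏ j ∈ Finset.range u, (a u - a j)) *
        ∏ j ∈ Finset.range v, (a u - a (u + (j + 1))))⁻¹ := by
  induction v with
  | zero =>
    simp [Lagrange.nodalWeight, Finset.range_add_one, Finset.prod_inv_distrib]
  | succ v ih =>
    rw [← add_assoc, Finset.range_add_one, nodalWeight_insert a (by simp) (by simp), ih,
      Finset.prod_range_succ, ← mul_assoc, mul_inv _ (a u - _), add_assoc u v 1]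

/-- The divided difference at the nodes `a i`, `i ∈ s`, of the function `y ↦ exp (y * x)`, written
in Lagrange form `∑ i ∈ s, exp (a i * x) / ∏ j ∈ s \ {i}, (a i - a j)`. -/
noncomputable def expDividedDiff (s : Finset ι) (a : ι → ℝ) (x : ℝ) : ℝ :=
  ∑ i ∈ s, Lagrange.nodalWeight s a i * Real.exp (a i * x)

variable {a : ι → ℝ} {x : ℝ}

lemma expDividedDiff_zero (ha : Set.InjOn a s) (hs : 1 < s.card) : expDividedDiff s a 0 = 0 := by
  simpa [expDividedDiff] using sum_nodalWeight_eq_zero ha hs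

lemma expDividedDiff_singleton (i : ι) (a : ι → ℝ) (x : ℝ) :
    expDividedDiff {i} a x = Real.exp (a i * x) := by
  simp [expDividedDiff, Lagrange.nodalWeight]

@[fun_prop]
lemma continuous_expDividedDiff (s : Finset ι) (a : ι → ℝ) : Continuous (expDividedDiff s a) := by
  unfold expDividedDiff
  fun_prop

lemma exp_neg_mul_expDividedDiff (s : Finset ι) (a : ι → ℝ) (b x : ℝ) :
    Real.exp (-b * x) * expDividedDiff s a x =
      ∑ i ∈ s, Lagrange.nodalWeight s a i * Real.exp ((a i - b) * x) := by
  rw [expDividedDiff, Finset.mul_sum]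
  refine Finset.sum_congr rfl fun i _ ↦ ?_
  rw [mul_left_comm, ← Real.exp_add]
  ring_nf

lemma hasDerivAt_exp_neg_mul_expDividedDiff_insert (ha : Set.InjOn a (insert i s : Finset ι))
    (hi : i ∉ s) (x : ℝ) :
    HasDerivAt (fun x ↦ Real.exp (-a i * x) * expDividedDiff (insert i s) a x)
      (Real.exp (-a i * x) * expDividedDiff s a x) x := by
  simp only [exp_neg_mul_expDividedDiff, Finset.sum_insert hi, sub_self, zero_mul, Real.exp_zero]
  refine HasDerivAt.const_add _ (HasDerivAt.fun_sum fun j hj ↦ ?_)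
  have hne : a j - a i ≠ 0 := sub_ne_zero.2 fun h ↦ hi <|
    ha (Finset.mem_insert_of_mem hj) (Finset.mem_insert_self i s) h ▸ hj
  refine (((hasDerivAt_id' x).const_mul (a j - a i)).exp.const_mul
    (Lagrange.nodalWeight (insert i s) a j)).congr_deriv ?_
  rw [nodalWeight_insert a hi hj]
  field_simp

lemma integral_exp_neg_mul_expDividedDiff (ha : Set.InjOn a (insert i s : Finset ι))
    (hi : i ∉ s) (hs : s.Nonempty) (x : ℝ) :
    ∫ y in (0 : ℝ)..x, Real.exp (-a i * y) * expDividedDiff s a y =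
      Real.exp (-a i * x) * expDividedDiff (insert i s) a x := by
  have hcard : 1 < (insert i s).card := by
    rw [Finset.card_insert_of_notMem hi]
    exact Nat.lt_add_of_pos_left hs.card_pos
  rw [intervalIntegral.integral_eq_sub_of_hasDerivAt
    (fun y _ ↦ hasDerivAt_exp_neg_mul_expDividedDiff_insert ha hi y)
    (Continuous.intervalIntegrable (by fun_prop) _ _), expDividedDiff_zero ha hcard, mul_zero,
    sub_zero]

lemma expDividedDiff_nonneg (ha : Set.InjOn a s) (hx : 0 ≤ x) : 0 ≤ expDividedDiff s a x := by
  induction s using Finset.induction_on generalizing x with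
  | empty => simp [expDividedDiff]
  | insert i s hi ih =>
    obtain rfl | hs := s.eq_empty_or_nonempty
    · rw [insert_empty_eq, expDividedDiff_singleton]
      positivity
    · refine nonneg_of_mul_nonneg_right ?_ (Real.exp_pos (-a i * x))
      rw [← integral_exp_neg_mul_expDividedDiff ha hi hs]
      have has : Set.InjOn a s := ha.mono (Finset.coe_subset.2 (Finset.subset_insert i s))
      exact intervalIntegral.integral_nonneg hx fun y hy ↦
        mul_nonneg (Real.exp_pos _).le (ih has hy.1)

lemma integral_expDividedDiff_Ioi (ha : ∀ i ∈ s, a i < 0) (T : ℝ) :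
    ∫ x in Set.Ioi T, expDividedDiff s a x =
      ∑ i ∈ s, Lagrange.nodalWeight s a i * (-Real.exp (a i * T) / a i) := by
  unfold expDividedDiff
  rw [integral_finsetSum _ fun i hi ↦ (integrableOn_exp_mul_Ioi (ha i hi) T).const_mul _]
  refine Finset.sum_congr rfl fun i hi ↦ ?_
  rw [integral_const_mul, integral_exp_mul_Ioi (ha i hi)]

end DividedDifferences

section OrderedRegions

open scoped ENNReal

variable {m : ℕ} {B : Set ℝ}

/-- The simplex `0 < w₁ < ⋯ < w_m < x`, the region left for the first `m` failure times once the
next one is known to be `x`. -/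
def orderedIoo (m : ℕ) (x : ℝ) : Set (Fin m → ℝ) :=
  {w | StrictMono w ∧ ∀ h, w h ∈ Set.Ioo 0 x}

/-- The region `0 < z₁ < ⋯ < z_{m+1}` with `z_{m+1} ∈ B`, where the set `B` constrains the last
failure time. -/
def orderedPos (m : ℕ) (B : Set ℝ) : Set (Fin (m + 1) → ℝ) :=
  {z | StrictMono z ∧ (∀ h, 0 < z h) ∧ z (Fin.last m) ∈ B}

lemma orderedIoo_zero (x : ℝ) : orderedIoo 0 x = Set.univ :=
  Set.eq_univ_of_forall fun w ↦ ⟨Subsingleton.strictMono w, fun h ↦ h.elim0⟩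

lemma orderedIoo_succ (m : ℕ) (x : ℝ) : orderedIoo (m + 1) x = orderedPos m (Set.Iio x) := by
  ext z
  constructor
  · rintro ⟨hmono, hmem⟩
    exact ⟨hmono, fun h ↦ (hmem h).1, (hmem _).2⟩
  · rintro ⟨hmono, hpos, hlast⟩
    exact ⟨hmono, fun h ↦ ⟨hpos h, (hmono.monotone (Fin.le_last h)).trans_lt hlast⟩⟩

lemma snoc_mem_orderedPos {w : Fin m → ℝ} {y : ℝ} :
    (Fin.snoc w y : Fin (m + 1) → ℝ) ∈ orderedPos m B ↔
      y ∈ Set.Ioi 0 ∩ B ∧ w ∈ orderedIoo m y := by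
  simp only [orderedPos, orderedIoo, ← Fin.insertNth_last', Fin.strictMono_insertNth_iff,
    Set.mem_ofPred_eq]
  simp only [Fin.castSucc_lt_last, forall_const, Fin.last_le_iff, Fin.castSucc_ne_last,
    IsEmpty.forall_iff, implies_true, and_true, Fin.insertNth_last', Fin.forall_fin_succ',
    Fin.snoc_castSucc, Fin.snoc_last, Fin.insertNth_apply_same, Set.mem_inter_iff, Set.mem_Ioi,
    Set.mem_Ioo, forall_and]
  tauto

lemma measurableSet_setOf_strictMono {ι α : Type*} [Preorder ι] [Countable ι] [LinearOrder α]
    [TopologicalSpace α] [OrderClosedTopology α] [SecondCountableTopology α] [MeasurableSpace α]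
    [OpensMeasurableSpace α] : MeasurableSet {w : ι → α | StrictMono w} := by
  simp only [StrictMono, Set.ofPred_forall]
  exact .iInter fun i ↦ .iInter fun j ↦ .iInter fun _ ↦
    measurableSet_lt (measurable_pi_apply i) (measurable_pi_apply j)

lemma measurableSet_orderedPos (m : ℕ) (hB : MeasurableSet B) :
    MeasurableSet (orderedPos m B) := by
  have hpos : MeasurableSet {z : Fin (m + 1) → ℝ | ∀ h, 0 < z h} := by measurability
  exact measurableSet_setOf_strictMono.inter
    (hpos.inter (measurable_pi_apply (Fin.last m) hB))

lemma measurableSet_orderedIoo (m : ℕ) (x : ℝ) : MeasurableSet (orderedIoo m x) := by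
  have hmem : MeasurableSet {w : Fin m → ℝ | ∀ h, w h ∈ Set.Ioo 0 x} := by measurability
  exact measurableSet_setOf_strictMono.inter hmem

lemma lintegral_eq_lintegral_lintegral_snoc {X : Type*} [MeasureSpace X]
    [SigmaFinite (volume : Measure X)] {f : (Fin (m + 1) → X) → ℝ≥0∞} (hf : Measurable f) :
    ∫⁻ z, f z = ∫⁻ y, ∫⁻ w : Fin m → X, f (Fin.snoc w y) := by
  have e := (volume_preserving_piFinSuccAbove (fun _ : Fin (m + 1) ↦ X) (Fin.last m)).symm
  rw [← e.lintegral_comp hf, Measure.volume_eq_prod,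
    lintegral_prod (fun p ↦ f _) (hf.comp (MeasurableEquiv.measurable _)).aemeasurable]
  simp [MeasurableEquiv.piFinSuccAbove_symm_apply, Fin.snocEquiv]

lemma setLIntegral_orderedPos (hB : MeasurableSet B) {f : (Fin (m + 1) → ℝ) → ℝ≥0∞}
    (hf : Measurable f) :
    ∫⁻ z in orderedPos m B, f z =
      ∫⁻ y in Set.Ioi 0 ∩ B, ∫⁻ w in orderedIoo m y, f (Fin.snoc w y) := by
  have hmeas := measurableSet_orderedPos m hB
  rw [← lintegral_indicator hmeas, lintegral_eq_lintegral_lintegral_snoc (hf.indicator hmeas),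
    ← lintegral_indicator (measurableSet_Ioi.inter hB)]
  refine lintegral_congr fun y ↦ ?_
  by_cases hy : y ∈ Set.Ioi 0 ∩ B
  · rw [Set.indicator_of_mem hy, ← lintegral_indicator (measurableSet_orderedIoo m y)]
    refine lintegral_congr fun w ↦ ?_
    by_cases hw : w ∈ orderedIoo m y
    · rw [Set.indicator_of_mem hw, Set.indicator_of_mem (snoc_mem_orderedPos.2 ⟨hy, hw⟩)]
    · rw [Set.indicator_of_notMem hw,
        Set.indicator_of_notMem fun hz ↦ hw (snoc_mem_orderedPos.1 hz).2]
  · simp [Set.indicator, snoc_mem_orderedPos, hy]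

lemma setLIntegral_orderedPos_exp (hB : MeasurableSet B) {c : (Fin m → ℝ) → ℝ}
    (hc : Measurable c) (b : ℝ) :
    ∫⁻ z in orderedPos m B,
        ENNReal.ofReal (Real.exp (c (Fin.init z) + z (Fin.last m) * b)) =
      ∫⁻ y in Set.Ioi 0 ∩ B, ENNReal.ofReal (Real.exp (y * b)) *
        ∫⁻ w in orderedIoo m y, ENNReal.ofReal (Real.exp (c w)) := by
  have hinit : Measurable (Fin.init : (Fin (m + 1) → ℝ) → Fin m → ℝ) :=
    measurable_pi_lambda _ fun h ↦ measurable_pi_apply h.castSucc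
  rw [setLIntegral_orderedPos hB (by fun_prop)]
  refine lintegral_congr fun y ↦ ?_
  rw [← lintegral_const_mul _ (by fun_prop)]
  refine lintegral_congr fun w ↦ ?_
  rw [Fin.init_snoc, Fin.snoc_last, add_comm, Real.exp_add,
    ENNReal.ofReal_mul (Real.exp_pos _).le]

end OrderedRegions

section HermiteGenocchi

variable {m : ℕ} {a : ℕ → ℝ}

lemma lintegral_orderedIoo_exp (ha : Set.InjOn a (Finset.range (m + 1))) {x : ℝ} (hx : 0 < x) :
    ∫⁻ w in orderedIoo m x,
        ENNReal.ofReal (Real.exp (∑ h : Fin m, w h * (a h - a (h + 1)))) =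
      ENNReal.ofReal (Real.exp (-a m * x) * expDividedDiff (Finset.range (m + 1)) a x) := by
  induction m generalizing x with
  | zero =>
    simp [orderedIoo_zero, expDividedDiff_singleton, ← Real.exp_add, volume_pi]
  | succ m ih =>
    have hrange : Finset.range (m + 1 + 1) = insert (m + 1) (Finset.range (m + 1)) :=
      Finset.range_add_one
    have ham : Set.InjOn a (Finset.range (m + 1)) :=
      ha.mono (Finset.coe_subset.2 (Finset.range_subset_range.2 (Nat.le_succ _)))
    let f (y : ℝ) : ℝ := Real.exp (-a (m + 1) * y) * expDividedDiff (Finset.range (m + 1)) a y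
    have hf : Continuous f := by fun_prop
    have hf_nonneg (y) (hy : y ∈ Set.Ioo 0 x) : 0 ≤ f y :=
      mul_nonneg (Real.exp_pos _).le (expDividedDiff_nonneg ham hy.1.le)
    calc
      _ = ∫⁻ z in orderedPos m (Set.Iio x), ENNReal.ofReal (Real.exp
            ((∑ h : Fin m, Fin.init z h * (a h - a (h + 1))) +
              z (Fin.last m) * (a m - a (m + 1)))) := by
        simp only [orderedIoo_succ, Fin.sum_univ_castSucc, Fin.init, Fin.val_castSucc,
          Fin.val_last]
      _ = ∫⁻ y in Set.Ioo 0 x, ENNReal.ofReal (f y) := by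
        rw [setLIntegral_orderedPos_exp (c := fun w ↦ ∑ h : Fin m, w h * (a h - a (h + 1)))
          measurableSet_Iio (by fun_prop), Set.Ioi_inter_Iio]
        refine setLIntegral_congr_fun measurableSet_Ioo fun y hy ↦ ?_
        simp only [f]
        rw [ih ham hy.1, ← ENNReal.ofReal_mul (Real.exp_pos _).le, ← mul_assoc, ← Real.exp_add]
        ring_nf
      _ = ENNReal.ofReal (∫ y in (0 : ℝ)..x, f y) := by
        rw [intervalIntegral.integral_of_le hx.le, integral_Ioc_eq_integral_Ioo,
          ofReal_integral_eq_lintegral_ofReal (hf.integrableOn_Icc.mono_set Set.Ioo_subset_Icc_self)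
            (ae_restrict_of_forall_mem measurableSet_Ioo hf_nonneg)]
      _ = _ := by
        rw [hrange] at ha ⊢
        rw [integral_exp_neg_mul_expDividedDiff ha (by simp) (by simp)]

lemma integral_orderedPos_Ioi_exp (ha : Set.InjOn a (Finset.range (m + 1)))
    (hneg : ∀ v ∈ Finset.range (m + 1), a v < 0) {T : ℝ} (hT : 0 ≤ T) :
    ∫ z in orderedPos m (Set.Ioi T), Real.exp
        ((∑ h : Fin m, z h.castSucc * (a h - a (h + 1))) + z (Fin.last m) * a m) =
      ∑ v ∈ Finset.range (m + 1), Lagrange.nodalWeight (Finset.range (m + 1)) a v *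
        (-Real.exp (a v * T) / a v) := by
  have hnonneg (y) (hy : y ∈ Set.Ioi T) : 0 ≤ expDividedDiff (Finset.range (m + 1)) a y :=
    expDividedDiff_nonneg ha (hT.trans hy.out.le)
  rw [← integral_expDividedDiff_Ioi hneg,
    integral_eq_lintegral_of_nonneg_ae (ae_of_all _ fun _ ↦ (Real.exp_pos _).le) (by fun_prop),
    integral_eq_lintegral_of_nonneg_ae (ae_restrict_of_forall_mem measurableSet_Ioi hnonneg)
      (by fun_prop)]
  congr 1
  calc
    _ = ∫⁻ y in Set.Ioi 0 ∩ Set.Ioi T, ENNReal.ofReal (Real.exp (y * a m)) *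
          ∫⁻ w in orderedIoo m y,
            ENNReal.ofReal (Real.exp (∑ h : Fin m, w h * (a h - a (h + 1)))) :=
      setLIntegral_orderedPos_exp (c := fun w ↦ ∑ h : Fin m, w h * (a h - a (h + 1)))
        measurableSet_Ioi (by fun_prop) (a m)
    _ = _ := by
      rw [Set.inter_eq_right.2 (Set.Ioi_subset_Ioi hT)]
      refine setLIntegral_congr_fun measurableSet_Ioi fun y hy ↦ ?_
      rw [lintegral_orderedIoo_exp ha (hT.trans_lt hy), ← ENNReal.ofReal_mul (Real.exp_pos _).le,
        ← mul_assoc, ← Real.exp_add, mul_comm y, ← add_mul, add_neg_cancel, zero_mul,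
        Real.exp_zero, one_mul]

end HermiteGenocchi

section Rates

lemma prod_range_add_one_eq_prod_Icc {M : Type*} [CommMonoid M] (f : ℕ → M) (n : ℕ) :
    ∏ j ∈ Finset.range n, f (j + 1) = ∏ j ∈ Finset.Icc 1 n, f j := by
  rw [Finset.range_eq_Ico, Finset.prod_Ico_add' f 0 n 1]
  rfl

lemma nodalWeight_range_neg_mul {F : Type*} [Field F] (s : F) (γ : ℕ → F) (u v : ℕ) :
    Lagrange.nodalWeight (Finset.range (u + v + 1)) (fun j ↦ -s * γ (j + 1)) u =
      (s ^ (u + v))⁻¹ * ((-1) ^ v / ((∏ j ∈ Finset.Icc 1 v, (γ (u + 1) - γ (u + 1 + j))) *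
        ∏ j ∈ Finset.Icc 1 u, (γ j - γ (u + 1)))) := by
  have hlow : ∏ j ∈ Finset.range u, (-s * γ (u + 1) - -s * γ (j + 1)) =
      s ^ u * ∏ j ∈ Finset.Icc 1 u, (γ j - γ (u + 1)) := by
    rw [← prod_range_add_one_eq_prod_Icc]
    simpa [mul_sub, neg_add_eq_sub] using
      (Finset.pow_card_mul_prod (s := Finset.range u) (b := s)
        (f := fun j ↦ γ (j + 1) - γ (u + 1))).symm
  have hhigh : ∏ j ∈ Finset.range v, (-s * γ (u + 1) - -s * γ (u + (j + 1) + 1)) =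
      (-s) ^ v * ∏ j ∈ Finset.Icc 1 v, (γ (u + 1) - γ (u + 1 + j)) := by
    rw [← prod_range_add_one_eq_prod_Icc]
    simpa [mul_sub, add_right_comm u 1] using
      (Finset.pow_card_mul_prod (s := Finset.range v) (b := -s)
        (f := fun j ↦ γ (u + 1) - γ (u + 1 + (j + 1)))).symm
  rw [nodalWeight_range, hlow, hhigh, neg_pow s, pow_add]
  simp only [div_eq_mul_inv, mul_inv, ← inv_pow, inv_neg, inv_one]
  ring

lemma nodalWeight_range_neg_mul_mul_exp_div (s T : ℝ) (γ : ℕ → ℝ) (u v : ℕ) :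
    Lagrange.nodalWeight (Finset.range (u + v + 1)) (fun j ↦ -s * γ (j + 1)) u *
        (-Real.exp (-s * γ (u + 1) * T) / (-s * γ (u + 1))) =
      (s ^ (u + v + 1))⁻¹ * ((-1) ^ v * Real.exp (-s * T * γ (u + 1)) /
        ((∏ j ∈ Finset.Icc 1 v, (γ (u + 1) - γ (u + 1 + j))) *
          (∏ j ∈ Finset.Icc 1 u, (γ j - γ (u + 1))) * γ (u + 1))) := by
  rw [nodalWeight_range_neg_mul, mul_right_comm (-s), neg_mul s (γ _), neg_div_neg_eq, pow_succ]
  simp only [div_eq_mul_inv, mul_inv]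
  ring

theorem mgf_integral_case_Zk_general (k : ℕ) (hk : 1 ≤ k) (γ : ℕ → ℝ)
    (hγ_inj : Set.InjOn γ (Set.Icc 1 k)) (hγ_pos : ∀ v ∈ Set.Icc 1 k, 0 < γ v)
    (s T : ℝ) (hs : 0 < s) (hT : 0 ≤ T) :
    ∫ z in {z : Fin k → ℝ | StrictMono z ∧ (∀ h, 0 < z h) ∧
        T < z ⟨k - 1, Nat.sub_lt (by omega) Nat.one_pos⟩},
        Real.exp (-s * ((∑ h : Fin (k - 1),
            z ⟨h.1, lt_of_lt_of_le h.2 (Nat.sub_le k 1)⟩ * (γ (h.1 + 1) - γ (h.1 + 2))) +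
          z ⟨k - 1, Nat.sub_lt (by omega) Nat.one_pos⟩ * γ k)) =
      s ^ (-(k : ℤ)) *
        ∑ v ∈ Finset.range k,
          (-1 : ℝ) ^ v * Real.exp (-s * T * γ (k - v)) /
            ((∏ j ∈ Finset.Icc 1 v, (γ (k - v) - γ (k - v + j))) *
              (∏ j ∈ Finset.Icc 1 (k - 1 - v), (γ j - γ (k - v))) *
              γ (k - v)) := by
  obtain ⟨m, rfl⟩ : ∃ m, k = m + 1 := ⟨k - 1, by lia⟩
  have hmem {v : ℕ} (hv : v ∈ Finset.range (m + 1)) : v + 1 ∈ Set.Icc 1 (m + 1) := by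
    simp only [Finset.mem_range, Set.mem_Icc] at hv ⊢
    lia
  have ha : Set.InjOn (fun j ↦ -s * γ (j + 1)) (Finset.range (m + 1)) := fun u hu v hv huv ↦
    Nat.succ_injective (hγ_inj (hmem hu) (hmem hv) (mul_left_cancel₀ (neg_ne_zero.2 hs.ne') huv))
  have hneg : ∀ v ∈ Finset.range (m + 1), -s * γ (v + 1) < 0 := fun v hv ↦
    mul_neg_of_neg_of_pos (neg_neg_of_pos hs) (hγ_pos _ (hmem hv))
  have hexponent (z : Fin (m + 1) → ℝ) :
      -s * ((∑ h : Fin m, z h.castSucc * (γ (h + 1) - γ (h + 2))) + z (Fin.last m) * γ (m + 1)) =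
        (∑ h : Fin m, z h.castSucc * (-s * γ (h + 1) - -s * γ (h + 1 + 1))) +
          z (Fin.last m) * (-s * γ (m + 1)) := by
    rw [mul_add, Finset.mul_sum]
    exact congrArg₂ _ (Finset.sum_congr rfl fun h _ ↦ by ring) (by ring)
  calc
    _ = ∫ z in orderedPos m (Set.Ioi T), Real.exp
          ((∑ h : Fin m, z h.castSucc * (-s * γ (h + 1) - -s * γ (h + 1 + 1))) +
            z (Fin.last m) * (-s * γ (m + 1))) := by
      simp only [← hexponent]
      rfl
    _ = _ := integral_orderedPos_Ioi_exp ha hneg hT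
    _ = _ := by
      rw [← Finset.sum_range_reflect, zpow_neg, zpow_natCast, Finset.mul_sum]
      refine Finset.sum_congr rfl fun v hv ↦ ?_
      obtain ⟨u, rfl⟩ : ∃ u, m = u + v := ⟨m - v, by have := Finset.mem_range.1 hv; lia⟩
      simp only [show u + v + 1 - v = u + 1 by lia, Nat.add_sub_cancel]
      exact nodalWeight_range_neg_mul_mul_exp_div s T γ u v

end Rates

section ProgressiveCensoring

variable (n : ℕ) (R : ℕ → ℕ)

lemma gam_sub_gam_succ (v : ℕ) : gam n R (v + 1) - gam n R (v + 2) = 1 + R (v + 1) := by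
  simp only [gam, Nat.add_sub_cancel, show v + 2 - 1 = v + 1 by lia]
  rw [Finset.sum_Icc_succ_top (by lia)]
  push_cast
  ring

lemma gam_strictAnti : StrictAnti (gam n R) := by
  refine strictAnti_nat_of_succ_lt fun v ↦ sub_pos.1 ?_
  cases v with
  | zero => simp [gam]
  | succ v =>
    rw [gam_sub_gam_succ]
    positivity

variable {n R}

lemma gam_pos {v : ℕ} (hv : (∑ u ∈ Finset.Icc 1 (v - 1), R u) + v ≤ n) : 0 < gam n R v := by
  have hv' : (∑ u ∈ Finset.Icc 1 (v - 1), (R u : ℝ)) + v ≤ n := by exact_mod_cast hv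
  rw [gam]
  linarith

end ProgressiveCensoring

/-- The iterated integral over `{0 < z₁ < ⋯ < z_k, z_k > T}` of
`exp(−s(Σ_{h=1}^{k−1} z_h (1 + R_h) + z_k γ_k))` equals
`s^{−k} Σ_{v=0}^{k−1} (−1)^v e^{−s T γ_{k−v}} / [⋯ γ_{k−v}]`; this is the computational
content of the conditional MGF of `θ̂₁` given `T < Z_{k:m:n} < Z_{m:m:n}`, `D₁ = i`. -/
theorem mgf_integral_case_Zk (n k : ℕ) (hn : 1 ≤ n) (hk : 1 ≤ k) (R : ℕ → ℕ)
    (hR : (∑ u ∈ Finset.Icc 1 (k - 1), R u) + k ≤ n)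
    (θ T : ℝ) (hθ : 0 < θ) (hT : 0 < T)
    (i : ℕ) (hi1 : 1 ≤ i) (hik : i ≤ k)
    (t s : ℝ) (ht : t / i < 1 / θ) (hs : s = 1 / θ - t / i) :
    ∫ z in {z : Fin k → ℝ | StrictMono z ∧ (∀ h, 0 < z h) ∧
        T < z ⟨k - 1, Nat.sub_lt (by omega) Nat.one_pos⟩},
        Real.exp (-s * ((∑ h : Fin (k - 1),
            z ⟨h.1, lt_of_lt_of_le h.2 (Nat.sub_le k 1)⟩ * (1 + (R (h.1 + 1) : ℝ))) +
          z ⟨k - 1, Nat.sub_lt (by omega) Nat.one_pos⟩ * gam n R k)) =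
      s ^ (-(k : ℤ)) *
        ∑ v ∈ Finset.range k,
          (-1 : ℝ) ^ v * Real.exp (-s * T * gam n R (k - v)) /
            ((∏ j ∈ Finset.Icc 1 v, (gam n R (k - v) - gam n R (k - v + j))) *
              (∏ j ∈ Finset.Icc 1 (k - 1 - v), (gam n R j - gam n R (k - v))) *
              gam n R (k - v)) := by
  have hs_pos : 0 < s := hs ▸ sub_pos.2 ht
  have hγ_pos : ∀ v ∈ Set.Icc 1 k, 0 < gam n R v := fun v hv ↦
    (gam_pos hR).trans_le ((gam_strictAnti n R).antitone hv.2)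
  simpa only [gam_sub_gam_succ] using mgf_integral_case_Zk_general k hk (gam n R)
    (gam_strictAnti n R).injective.injOn hγ_pos s T hs_pos hT.le
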